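/- arXiv:2004.06225 — 3 statements merged into one kernel-verified Lean document; each statement's English description precedes it below -/
import Mathlib

section
/- Let C be an abelian category, ι : K ⟶ P a monomorphism, f : K ⟶ Y a morphism, and let (Q, θ : P ⟶ Q, j : Y ⟶ Q) be a pushout of ι along f, i.e. j∘f = θ∘ι and the square is cocartesian. Then: (1) for every g : P ⟶ Y with g∘ι = 0 there is a unique morphism h_g : Q ⟶ Q with h_g∘θ = θ − j∘g and h_g∘j = j; (2) h_0 = 1_Q; (3) h_{g₁+g₂} = h_{g₂}∘h_{g₁} for all g₁, g₂ : P ⟶ Y with g₁∘ι = g₂∘ι = 0; in particular every h_g is an isomorphism with inverse h_{−g}. -/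
/-!
STATEMENT 2: In an abelian category, let `(Q, θ, j)` be a pushout of a monomorphism
`ι : K ⟶ P` along `f : K ⟶ Y`.  Then:
(1) for every `g : P ⟶ Y` with `ι ≫ g = 0` there is a unique `h : Q ⟶ Q` with
    `θ ≫ h = θ - g ≫ j` and `j ≫ h = j`  (this is `h_g`);
(2) `h_0 = 𝟙 Q`;
(3) `h_{g₁+g₂} = h_{g₂} ∘ h_{g₁}`  (i.e. `h_{g₁+g₂} = h_{g₁} ≫ h_{g₂}`);
(4) in particular every `h_g` is an isomorphism with inverse `h_{-g}`.
-/

open CategoryTheory CategoryTheory.Limits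

/-- The relation `h = h_g`: the endomorphism `h` of `Q` fixes `j` and moves `θ` by `-g ≫ j`.
It is a relation rather than a function of `g`, so that composition and identities can be treated
before existence and uniqueness, which hold when `(Q, θ, j)` is a pushout. -/
def IsShear {C : Type*} [Category C] [Preadditive C] {P Y Q : C}
    (θ : P ⟶ Q) (j : Y ⟶ Q) (g : P ⟶ Y) (h : Q ⟶ Q) : Prop :=
  θ ≫ h = θ - g ≫ j ∧ j ≫ h = j

namespace IsShear

variable {C : Type*} [Category C] [Preadditive C] {K P Y Q : C}
  {ι : K ⟶ P} {f : K ⟶ Y} {θ : P ⟶ Q} {j : Y ⟶ Q} {g g₁ g₂ : P ⟶ Y} {h h₁ h₂ : Q ⟶ Q}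

theorem id_zero : IsShear θ j 0 (𝟙 Q) :=
  ⟨by rw [Category.comp_id, zero_comp, sub_zero], Category.comp_id j⟩

theorem comp (hs₁ : IsShear θ j g₁ h₁) (hs₂ : IsShear θ j g₂ h₂) :
    IsShear θ j (g₁ + g₂) (h₁ ≫ h₂) := by
  obtain ⟨θ_h₁, j_h₁⟩ := hs₁
  obtain ⟨θ_h₂, j_h₂⟩ := hs₂
  constructor
  · calc θ ≫ h₁ ≫ h₂ = (θ - g₁ ≫ j) ≫ h₂ := by rw [← Category.assoc, θ_h₁]
      _ = θ ≫ h₂ - g₁ ≫ j ≫ h₂ := by rw [Preadditive.sub_comp, Category.assoc]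
      _ = θ - g₂ ≫ j - g₁ ≫ j := by rw [θ_h₂, j_h₂]
      _ = θ - (g₁ + g₂) ≫ j := by rw [Preadditive.add_comp, sub_sub, add_comm]
  · rw [← Category.assoc, j_h₁, j_h₂]

theorem eq_of_isPushout (hpo : IsPushout ι f θ j) (hs₁ : IsShear θ j g h₁)
    (hs₂ : IsShear θ j g h₂) : h₁ = h₂ :=
  hpo.hom_ext (hs₁.1.trans hs₂.1.symm) (hs₁.2.trans hs₂.2.symm)

theorem existsUnique_of_isPushout (hpo : IsPushout ι f θ j) (hg : ι ≫ g = 0) :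
    ∃! h : Q ⟶ Q, IsShear θ j g h := by
  have cocone_comm : ι ≫ (θ - g ≫ j) = f ≫ j := by
    rw [Preadditive.comp_sub, ← Category.assoc, hg, zero_comp, sub_zero, hpo.w]
  have desc_isShear : IsShear θ j g (hpo.desc (θ - g ≫ j) j cocone_comm) :=
    ⟨hpo.inl_desc _ _ _, hpo.inr_desc _ _ _⟩
  exact ⟨_, desc_isShear, fun _ hs => hs.eq_of_isPushout hpo desc_isShear⟩

theorem eq_id_of_isPushout (hpo : IsPushout ι f θ j) (hs : IsShear θ j 0 h) : h = 𝟙 Q :=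
  hs.eq_of_isPushout hpo id_zero

theorem comp_eq_id_of_isPushout (hpo : IsPushout ι f θ j) (hs₁ : IsShear θ j g₁ h₁)
    (hs₂ : IsShear θ j g₂ h₂) (hg : g₁ + g₂ = 0) : h₁ ≫ h₂ = 𝟙 Q :=
  eq_id_of_isPushout hpo (hg ▸ hs₁.comp hs₂)

end IsShear

theorem stmt2_general {C : Type*} [Category C] [Preadditive C] {K P Y Q : C}
    {ι : K ⟶ P} {f : K ⟶ Y} {θ : P ⟶ Q} {j : Y ⟶ Q} (hpo : IsPushout ι f θ j) :
    (∀ g : P ⟶ Y, ι ≫ g = 0 → ∃! h : Q ⟶ Q, IsShear θ j g h) ∧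
    (∀ h : Q ⟶ Q, IsShear θ j 0 h → h = 𝟙 Q) ∧
    (∀ (g₁ g₂ : P ⟶ Y) (h₁ h₂ h₁₂ : Q ⟶ Q), IsShear θ j g₁ h₁ → IsShear θ j g₂ h₂ →
      IsShear θ j (g₁ + g₂) h₁₂ → h₁₂ = h₁ ≫ h₂) ∧
    (∀ (g : P ⟶ Y) (h h' : Q ⟶ Q), IsShear θ j g h → IsShear θ j (-g) h' →
      h ≫ h' = 𝟙 Q ∧ h' ≫ h = 𝟙 Q) := by
  refine ⟨fun g hg => IsShear.existsUnique_of_isPushout hpo hg,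
    fun h hs => hs.eq_id_of_isPushout hpo, ?comp, ?inverse⟩
  case comp =>
    intro g₁ g₂ h₁ h₂ h₁₂ hs₁ hs₂ hs₁₂
    exact hs₁₂.eq_of_isPushout hpo (hs₁.comp hs₂)
  case inverse =>
    intro g h h' hs hs'
    exact ⟨hs.comp_eq_id_of_isPushout hpo hs' (add_neg_cancel g),
      hs'.comp_eq_id_of_isPushout hpo hs (neg_add_cancel g)⟩

theorem stmt2 {C : Type*} [Category C] [Abelian C] {K P Y Q : C}
    (ι : K ⟶ P) (hι : Mono ι) (f : K ⟶ Y) (θ : P ⟶ Q) (j : Y ⟶ Q)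
    (hpo : IsPushout ι f θ j) :
    -- (1) existence and uniqueness of `h_g`
    (∀ g : P ⟶ Y, ι ≫ g = 0 →
      ∃! h : Q ⟶ Q, θ ≫ h = θ - g ≫ j ∧ j ≫ h = j) ∧
    -- (2) `h_0 = 𝟙 Q`
    (∀ h : Q ⟶ Q, (θ ≫ h = θ - (0 : P ⟶ Y) ≫ j ∧ j ≫ h = j) → h = 𝟙 Q) ∧
    -- (3) `h_{g₁+g₂} = h_{g₂} ∘ h_{g₁}`
    (∀ g₁ g₂ : P ⟶ Y, ι ≫ g₁ = 0 → ι ≫ g₂ = 0 →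
      ∀ h₁ h₂ h₁₂ : Q ⟶ Q,
        (θ ≫ h₁ = θ - g₁ ≫ j ∧ j ≫ h₁ = j) →
        (θ ≫ h₂ = θ - g₂ ≫ j ∧ j ≫ h₂ = j) →
        (θ ≫ h₁₂ = θ - (g₁ + g₂) ≫ j ∧ j ≫ h₁₂ = j) →
        h₁₂ = h₁ ≫ h₂) ∧
    -- (4) every `h_g` is an isomorphism with inverse `h_{-g}`
    (∀ g : P ⟶ Y, ι ≫ g = 0 →
      ∀ h h' : Q ⟶ Q,
        (θ ≫ h = θ - g ≫ j ∧ j ≫ h = j) →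
        (θ ≫ h' = θ - (-g) ≫ j ∧ j ≫ h' = j) →
        h ≫ h' = 𝟙 Q ∧ h' ≫ h = 𝟙 Q) := by
  obtain ⟨existsUnique, eq_id, eq_comp, inverse⟩ := stmt2_general hpo
  exact ⟨existsUnique, eq_id, fun g₁ g₂ _ _ => eq_comp g₁ g₂, fun g _ => inverse g⟩
end

section
/- Let C be an abelian category and n ≥ 2. Let P₀, …, P_{n−1} be objects of C with morphisms d_i : P_{i+1} ⟶ P_i for 0 ≤ i ≤ n−3 and d_{n−2} : P_{n−1} ⟶ P_{n−2}, satisfying d_i∘d_{i+1} = 0 for all applicable i. Let ι : W ⟶ P_{n−1} be a monomorphism, f̄ : W ⟶ Y a morphism, and (Q, θ : P_{n−1} ⟶ Q, j : Y ⟶ Q) a pushout of ι along f̄. Let d_f : Q ⟶ P_{n−2} satisfy d_f∘θ = d_{n−2} and d_f∘j = 0. Let K be the ℕ-indexed chain complex with K_{n−1} = Q, K_i = P_i for 0 ≤ i ≤ n−2, K_i = 0 for i ≥ n, with differential d_f from degree n−1 to n−2 and the d_i in lower degrees. For g : P_{n−1} ⟶ Y with g∘ι = 0, let h_g : Q ⟶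 Q be the unique morphism with h_g∘θ = θ − j∘g and h_g∘j = j, and let M(g) : K ⟶ K be the family which is h_g in degree n−1 and the identity in all other degrees. Then: (1) M(g) is a chain map; (2) if g, g' : P_{n−1} ⟶ Y satisfy g∘ι = g'∘ι = 0 and g' = g + p∘d_{n−2} for some p : P_{n−2} ⟶ Y, then M(g) and M(g') are chain homotopic, a chain homotopy being given by the family whose only nonzero component is j∘p : K_{n−2} ⟶ K_{n−1}. -/
/-!
STATEMENT 3: Schwede's endomorphism `μ_f(g) = M(g)` of the `n`-extension complex `K(f)`
is a chain map, and its homotopy class only depends on the cohomology class of `g`.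
Here `n ≥ 2` is written as `n = N + 2`, so that `n - 1 = N + 1`, `n - 2 = N`,
`n - 3 = N - 1`.  The objects `P₀, …, P_{n-1}` are `P 0, …, P (N+1)`, and the
differentials `d_i : P_{i+1} ⟶ P_i` for `0 ≤ i ≤ n - 2` are `d i _ : P (i+1) ⟶ P i`
for `i ≤ N`.
-/

open CategoryTheory CategoryTheory.Limits ZeroObject

universe v u

variable {C : Type u} [Category.{v} C] [Abelian C]

/-- The underlying objects of the complex `K`: `K_i = P_i` for `i ≤ n-2 = N`,
`K_{n-1} = Q`, and `K_i = 0` for `i ≥ n = N + 2`. -/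
noncomputable def KX (P : ℕ → C) (Q : C) (N : ℕ) (i : ℕ) : C :=
  if i ≤ N then P i else if i = N + 1 then Q else 0

lemma KX_of_le (P : ℕ → C) (Q : C) (N i : ℕ) (h : i ≤ N) : KX P Q N i = P i := by
  unfold KX; rw [if_pos h]

lemma KX_top (P : ℕ → C) (Q : C) (N i : ℕ) (h : i = N + 1) : KX P Q N i = Q := by
  unfold KX; rw [if_neg (by omega), if_pos h]

/-- The differential of the complex `K`: the maps `d_i` in degrees `≤ n-3`,
the map `d_f : Q ⟶ P_{n-2}` from degree `n-1` to degree `n-2`, and `0` above. -/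
noncomputable def KD (P : ℕ → C) (Q : C) (N : ℕ)
    (d : ∀ i, i ≤ N → (P (i + 1) ⟶ P i)) (df : Q ⟶ P N) (i : ℕ) :
    KX P Q N (i + 1) ⟶ KX P Q N i :=
  if h1 : i + 1 ≤ N then
    eqToHom (KX_of_le P Q N (i + 1) h1) ≫ d i (by omega) ≫
      eqToHom (KX_of_le P Q N i (by omega)).symm
  else if h2 : i = N then
    eqToHom (KX_top P Q N (i + 1) (by omega)) ≫ df ≫
      eqToHom (show P N = KX P Q N i by rw [KX_of_le P Q N i (by omega), h2])
  else 0

/-- The endomorphism `M(g)` of `K`, which is `h_g` in degree `n-1 = N+1` and the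
identity elsewhere. -/
noncomputable def Mg (P : ℕ → C) (Q : C) (N : ℕ) (hg : Q ⟶ Q) (i : ℕ) :
    KX P Q N i ⟶ KX P Q N i :=
  if h : i = N + 1 then
    eqToHom (KX_top P Q N i h) ≫ hg ≫ eqToHom (KX_top P Q N i h).symm
  else 𝟙 _

/-- The degree `+1` family whose only nonzero component is `p' : P_{n-2} ⟶ Q = K_{n-1}`
in degree `n-2 = N` (in the statement, `p' = p ≫ j`). -/
noncomputable def Sp (P : ℕ → C) (Q : C) (N : ℕ) (p' : P N ⟶ Q) (i : ℕ) :
    KX P Q N i ⟶ KX P Q N (i + 1) :=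
  if h : i = N then
    eqToHom (show KX P Q N i = P N by rw [KX_of_le P Q N i (by omega), h]) ≫ p' ≫
      eqToHom (KX_top P Q N (i + 1) (by omega)).symm
  else 0

/-!
Since `θ` and `j` are jointly epimorphic, identities between morphisms out of `Q` may be tested
after composing with them. This gives `h_g ≫ d_f = d_f`, so `M(g)` is a chain map, and
`h_g - h_{g'} = d_f ≫ p ≫ j`, which is the only nonzero component of `M(g) - M(g')`. As
`j ≫ d_f = 0`, the homotopy followed by the differential vanishes, and the differential followed
by the homotopy is exactly this component.
-/

lemma hom_ext_of_epi_biprod_desc {D : Type*} [Category* D] [HasZeroMorphisms D] {A B E F : D}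
    [HasBinaryBiproduct A B] (θ : A ⟶ E) (j : B ⟶ E) [Epi (biprod.desc θ j)] {a b : E ⟶ F}
    (hθ : θ ≫ a = θ ≫ b) (hj : j ≫ a = j ≫ b) : a = b := by
  rw [← cancel_epi (biprod.desc θ j)]
  ext <;> simpa

section Preadditive

variable {D : Type*} [Category* D] [Preadditive D] {A B E F : D}

/-- `h` is an endomorphism `h_g` of `E` attached to `g`: it fixes `j` and translates `θ` by
`-g ≫ j`. When `θ` and `j` are the legs of a pushout, this determines `h`. -/
structure IsShear_s3 (θ : A ⟶ E) (j : B ⟶ E) (g : A ⟶ B) (h : E ⟶ E) : Prop where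
  left_comp : θ ≫ h = θ - g ≫ j
  right_comp : j ≫ h = j

namespace IsShear_s3

variable [HasBinaryBiproduct A B] {θ : A ⟶ E} {j : B ⟶ E} [Epi (biprod.desc θ j)]
  {g : A ⟶ B} {h h' : E ⟶ E} {δ : E ⟶ F}

lemma comp_eq_of_comp_eq_zero (hh : IsShear_s3 θ j g h) (hδ : j ≫ δ = 0) : h ≫ δ = δ := by
  apply hom_ext_of_epi_biprod_desc θ j
  · calc
      θ ≫ h ≫ δ = (θ - g ≫ j) ≫ δ := by rw [← Category.assoc, hh.left_comp]
      _ = θ ≫ δ := by simp [hδ]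
  · rw [← Category.assoc, hh.right_comp]

lemma sub_eq_comp (hh : IsShear_s3 θ j g h) {p : F ⟶ B}
    (hh' : IsShear_s3 θ j (g + θ ≫ δ ≫ p) h') (hδ : j ≫ δ = 0) : h - h' = δ ≫ p ≫ j := by
  apply hom_ext_of_epi_biprod_desc θ j
  · calc
      θ ≫ (h - h') = (θ - g ≫ j) - (θ - (g + θ ≫ δ ≫ p) ≫ j) := by
        rw [Preadditive.comp_sub, hh.left_comp, hh'.left_comp]
      _ = θ ≫ δ ≫ p ≫ j := by simp
  · calc
      j ≫ (h - h') = 0 := by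
        rw [Preadditive.comp_sub, hh.right_comp, hh'.right_comp, sub_self]
      _ = j ≫ δ ≫ p ≫ j := by rw [reassoc_of% hδ, zero_comp]

end IsShear_s3

end Preadditive

section Components

variable (P : ℕ → C) {Q : C} (N : ℕ) (d : ∀ i, i ≤ N → (P (i + 1) ⟶ P i)) (df : Q ⟶ P N)
  (h : Q ⟶ Q) (s : P N ⟶ Q)

lemma KD_self : KD P Q N d df N =
    eqToHom (KX_top P Q N (N + 1) rfl) ≫ df ≫ eqToHom (KX_of_le P Q N N le_rfl).symm := by
  simp [KD]

lemma KD_of_lt {i : ℕ} (hi : N < i) : KD P Q N d df i = 0 := by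
  rw [KD, dif_neg (by omega), dif_neg hi.ne']

lemma Mg_top : Mg P Q N h (N + 1) =
    eqToHom (KX_top P Q N (N + 1) rfl) ≫ h ≫ eqToHom (KX_top P Q N (N + 1) rfl).symm :=
  dif_pos rfl

lemma Mg_of_ne {i : ℕ} (hi : i ≠ N + 1) : Mg P Q N h i = 𝟙 (KX P Q N i) :=
  dif_neg hi

lemma Sp_self : Sp P Q N s N =
    eqToHom (KX_of_le P Q N N le_rfl) ≫ s ≫ eqToHom (KX_top P Q N (N + 1) rfl).symm :=
  dif_pos rfl

lemma Sp_of_ne {i : ℕ} (hi : i ≠ N) : Sp P Q N s i = 0 :=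
  dif_neg hi

end Components

section Complex

variable {P : ℕ → C} {Q : C} {N : ℕ} (d : ∀ i, i ≤ N → (P (i + 1) ⟶ P i)) {df : Q ⟶ P N}
  {h h' : Q ⟶ Q} {s : P N ⟶ Q}

lemma Mg_comp_KD (hdf : h ≫ df = df) (i : ℕ) :
    Mg P Q N h (i + 1) ≫ KD P Q N d df i = KD P Q N d df i ≫ Mg P Q N h i := by
  rcases lt_trichotomy i N with hlt | rfl | hgt
  · rw [Mg_of_ne P N h (by omega), Mg_of_ne P N h (by omega), Category.id_comp,
      Category.comp_id]
  · rw [Mg_top, Mg_of_ne P i h (by omega), KD_self]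
    simp [reassoc_of% hdf]
  · rw [KD_of_lt P N d df hgt, comp_zero, zero_comp]

lemma Sp_comp_KD (hs : s ≫ df = 0) (i : ℕ) : Sp P Q N s i ≫ KD P Q N d df i = 0 := by
  obtain rfl | hi := eq_or_ne i N
  · rw [Sp_self, KD_self]
    simp [reassoc_of% hs]
  · rw [Sp_of_ne P N s hi, zero_comp]

lemma Mg_zero_sub_Mg_zero : Mg P Q N h 0 - Mg P Q N h' 0 = 0 := by
  rw [Mg_of_ne P N h (by omega), Mg_of_ne P N h' (by omega), sub_self]

lemma Mg_succ_sub_Mg_succ (hs : h - h' = df ≫ s) (i : ℕ) :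
    Mg P Q N h (i + 1) - Mg P Q N h' (i + 1) = KD P Q N d df i ≫ Sp P Q N s i := by
  obtain rfl | hi := eq_or_ne i N
  · rw [Mg_top, Mg_top, KD_self, Sp_self, ← Preadditive.comp_sub, ← Preadditive.sub_comp, hs]
    simp
  · rw [Mg_of_ne P N h (by omega), Mg_of_ne P N h' (by omega), Sp_of_ne P N s hi, sub_self,
      comp_zero]

end Complex

theorem stmt3_general (P : ℕ → C) (N : ℕ)
    (d : ∀ i, i ≤ N → (P (i + 1) ⟶ P i)) {Y Q : C}
    (θ : P (N + 1) ⟶ Q) (j : Y ⟶ Q) [Epi (biprod.desc θ j)]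
    (df : Q ⟶ P N) (hdf1 : θ ≫ df = d N le_rfl) (hdf2 : j ≫ df = 0) :
    (∀ (g : P (N + 1) ⟶ Y) (h : Q ⟶ Q), IsShear_s3 θ j g h →
      ∀ i, Mg P Q N h (i + 1) ≫ KD P Q N d df i = KD P Q N d df i ≫ Mg P Q N h i) ∧
    (∀ (g : P (N + 1) ⟶ Y) (p : P N ⟶ Y) (h h' : Q ⟶ Q),
      IsShear_s3 θ j g h → IsShear_s3 θ j (g + d N le_rfl ≫ p) h' →
        (Mg P Q N h 0 - Mg P Q N h' 0 = Sp P Q N (p ≫ j) 0 ≫ KD P Q N d df 0) ∧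
        (∀ i, Mg P Q N h (i + 1) - Mg P Q N h' (i + 1) =
          Sp P Q N (p ≫ j) (i + 1) ≫ KD P Q N d df (i + 1) +
          KD P Q N d df i ≫ Sp P Q N (p ≫ j) i)) := by
  refine ⟨fun g h hh ↦ Mg_comp_KD d (hh.comp_eq_of_comp_eq_zero hdf2),
    fun g p h h' hh hh' ↦ ?_⟩
  rw [← hdf1, Category.assoc] at hh'
  have sub_eq : h - h' = df ≫ p ≫ j := hh.sub_eq_comp hh' hdf2
  have Sp_KD (i : ℕ) : Sp P Q N (p ≫ j) i ≫ KD P Q N d df i = 0 :=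
    Sp_comp_KD d (by rw [Category.assoc, hdf2, comp_zero]) i
  refine ⟨?_, fun i ↦ ?_⟩
  · rw [Sp_KD, Mg_zero_sub_Mg_zero]
  · rw [Sp_KD, zero_add, Mg_succ_sub_Mg_succ d sub_eq]

theorem stmt3 (P : ℕ → C) (N : ℕ)
    (d : ∀ i, i ≤ N → (P (i + 1) ⟶ P i))
    (hdd : ∀ i (h : i + 1 ≤ N), d (i + 1) h ≫ d i (by omega) = 0)
    {W Y Q : C} (ι : W ⟶ P (N + 1)) (hι : Mono ι) (fbar : W ⟶ Y)
    (θ : P (N + 1) ⟶ Q) (j : Y ⟶ Q) (hpo : IsPushout ι fbar θ j)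
    (df : Q ⟶ P N) (hdf1 : θ ≫ df = d N (le_refl N)) (hdf2 : j ≫ df = 0) :
    -- (1) `M(g)` is a chain map
    (∀ g : P (N + 1) ⟶ Y, ι ≫ g = 0 →
      ∀ hg : Q ⟶ Q, (θ ≫ hg = θ - g ≫ j ∧ j ≫ hg = j) →
        ∀ i, Mg P Q N hg (i + 1) ≫ KD P Q N d df i = KD P Q N d df i ≫ Mg P Q N hg i) ∧
    -- (2) if `g' = g + p ∘ d_{n-2}` then `M(g)` and `M(g')` are chain homotopic,
    -- a homotopy being the family with only nonzero component `j ∘ p : K_{n-2} → K_{n-1}`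
    (∀ g g' : P (N + 1) ⟶ Y, ι ≫ g = 0 → ι ≫ g' = 0 →
      ∀ p : P N ⟶ Y, g' = g + d N (le_refl N) ≫ p →
      ∀ hg hg' : Q ⟶ Q,
        (θ ≫ hg = θ - g ≫ j ∧ j ≫ hg = j) →
        (θ ≫ hg' = θ - g' ≫ j ∧ j ≫ hg' = j) →
        (Mg P Q N hg 0 - Mg P Q N hg' 0 = Sp P Q N (p ≫ j) 0 ≫ KD P Q N d df 0) ∧
        (∀ i, Mg P Q N hg (i + 1) - Mg P Q N hg' (i + 1) =
          Sp P Q N (p ≫ j) (i + 1) ≫ KD P Q N d df (i + 1) +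
          KD P Q N d df i ≫ Sp P Q N (p ≫ j) i)) := by
  have : Epi (biprod.desc θ j) := hpo.epi_shortComplex_g
  obtain ⟨chainMap, homotopy⟩ := stmt3_general P N d θ j df hdf1 hdf2
  refine ⟨fun g _ h hh ↦ chainMap g h ⟨hh.1, hh.2⟩, ?_⟩
  rintro g _ - - p rfl h h' hh hh'
  exact homotopy g p h h' ⟨hh.1, hh.2⟩ ⟨hh'.1, hh'.2⟩
end

section
/- Let C be an additive category with biproducts, let X and P₀ be objects and μ : P₀ ⟶ X a morphism. Consider the commutative square with: top map (0, μ) : X ⊞ P₀ ⟶ X; right map the diagonal (1,1)ᵗ : X ⟶ X ⊞ X; left map X ⊞ P₀ ⟶ X ⊞ X ⊞ P₀ given by the matrix with rows (1,0), (−1,μ), (0,1); and bottom map X ⊞ X ⊞ P₀ ⟶ X ⊞ X given by the matrix with rows (1,1,0), (0,0,μ). This square is a pullback square. -/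
/-!
STATEMENT 4: In an additive category with biproducts, the square

      X ⊞ P₀ --(0, μ)--> X
        |                 |
 (rows (1,0),(−1,μ),(0,1))|  (1,1)ᵗ
        v                 v
  X ⊞ X ⊞ P₀ --rows (1,1,0),(0,0,μ)--> X ⊞ X

is a pullback square.
-/

open CategoryTheory CategoryTheory.Limits

/-!
A pullback of the diagonal `X ⟶ X ⊞ X` along `(f, g)ᵗ` is an equalizer of `f` and `g`. A generalized
element `(p, q, r)` of `X ⊞ X ⊞ P₀` equalizes the two rows of the bottom map iff `p + q = μ r`, so
that `q = -p + μ r` is determined by the pair `(p, r)`, which can be chosen freely.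
-/

section Diagonal

variable {C : Type*} [Category C] [HasZeroMorphisms C] {X Z W : C} [HasBinaryBiproduct X X]

theorem comp_biprod_diag_eq_comp_lift_iff {h : W ⟶ X} {k : W ⟶ Z} {f g : Z ⟶ X} :
    h ≫ biprod.lift (𝟙 X) (𝟙 X) = k ≫ biprod.lift f g ↔ h = k ≫ f ∧ h = k ≫ g := by
  simp [biprod.hom_ext_iff]

theorem isPullback_biprod_diag_of_isLimit_fork {f g : Z ⟶ X} {ι : W ⟶ Z} {w : ι ≫ f = ι ≫ g}
    (hι : IsLimit (Fork.ofι ι w)) :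
    IsPullback (ι ≫ g) ι (biprod.lift (𝟙 X) (𝟙 X)) (biprod.lift f g) := by
  have legs (s : PullbackCone (biprod.lift (𝟙 X) (𝟙 X)) (biprod.lift f g)) :
      s.fst = s.snd ≫ f ∧ s.fst = s.snd ≫ g :=
    comp_biprod_diag_eq_comp_lift_iff.1 s.condition
  let lift (s : PullbackCone (biprod.lift (𝟙 X) (𝟙 X)) (biprod.lift f g)) : s.pt ⟶ W :=
    Fork.IsLimit.lift hι s.snd ((legs s).1.symm.trans (legs s).2)
  have lift_ι (s) : lift s ≫ ι = s.snd := Fork.IsLimit.lift_ι' hι _ _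
  refine ⟨⟨comp_biprod_diag_eq_comp_lift_iff.2 ⟨w.symm, rfl⟩⟩,
    ⟨PullbackCone.IsLimit.mk _ lift (fun s ↦ ?_) lift_ι (fun s m _ hm ↦ ?_)⟩⟩
  · rw [← Category.assoc, lift_ι, ← (legs s).2]
  · exact Fork.IsLimit.hom_ext hι (hm.trans (lift_ι s).symm)

end Diagonal

section SolveMiddle

variable {C : Type*} [Category C] [Preadditive C] [HasBinaryBiproducts C]
  {A B X : C} (a : A ⟶ X) (b : B ⟶ X)

/-- The map with matrix rows `(1, 0)`, `(-a, b)`, `(0, 1)`. It parametrizes the solutions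
`(p, q, r)` of `a p + q = b r` by `(p, r)`. -/
noncomputable def solveMiddle : A ⊞ B ⟶ A ⊞ (X ⊞ B) :=
  biprod.lift (biprod.desc (𝟙 A) 0)
    (biprod.lift (biprod.desc (-a) b) (biprod.desc 0 (𝟙 B)))

theorem lift_comp_solveMiddle {T : C} (p : T ⟶ A) (r : T ⟶ B) :
    biprod.lift p r ≫ solveMiddle a b = biprod.lift p (biprod.lift (-(p ≫ a) + r ≫ b) r) := by
  ext <;> simp [solveMiddle]

theorem solveMiddle_comp_desc_zero :
    solveMiddle a b ≫ biprod.desc 0 (biprod.desc 0 b) = biprod.desc 0 b := by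
  ext <;> simp [solveMiddle]

theorem solveMiddle_condition :
    solveMiddle a b ≫ biprod.desc a (biprod.desc (𝟙 X) 0) =
      solveMiddle a b ≫ biprod.desc 0 (biprod.desc 0 b) := by
  ext <;> simp [solveMiddle]

instance isSplitMono_solveMiddle : IsSplitMono (solveMiddle a b) :=
  .mk' ⟨biprod.map (𝟙 A) biprod.snd, by ext <;> simp [solveMiddle]⟩

variable {a b} {T : C} {k : T ⟶ A ⊞ (X ⊞ B)}

theorem comp_desc_eq_comp_desc_iff_middle_eq :
    k ≫ biprod.desc a (biprod.desc (𝟙 X) 0) = k ≫ biprod.desc 0 (biprod.desc 0 b) ↔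
      k ≫ biprod.snd ≫ biprod.fst =
        -((k ≫ biprod.fst) ≫ a) + (k ≫ biprod.snd ≫ biprod.snd) ≫ b := by
  simp [biprod.desc_eq, eq_neg_add_iff_add_eq]

theorem lift_outer_comp_solveMiddle
    (hk : k ≫ biprod.desc a (biprod.desc (𝟙 X) 0) = k ≫ biprod.desc 0 (biprod.desc 0 b)) :
    biprod.lift (k ≫ biprod.fst) (k ≫ biprod.snd ≫ biprod.snd) ≫ solveMiddle a b = k := by
  rw [lift_comp_solveMiddle, ← comp_desc_eq_comp_desc_iff_middle_eq.1 hk]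
  ext <;> simp

variable (a b)

/-- `solveMiddle a b` is an equalizer of the rows `(a, 1, 0)` and `(0, 0, b)`. -/
noncomputable def isLimitForkSolveMiddle :
    IsLimit (Fork.ofι (solveMiddle a b) (solveMiddle_condition a b)) :=
  Fork.IsLimit.mk _
    (fun s ↦ biprod.lift (s.ι ≫ biprod.fst) (s.ι ≫ biprod.snd ≫ biprod.snd))
    (fun s ↦ lift_outer_comp_solveMiddle s.condition)
    (fun s _ hm ↦ (cancel_mono (solveMiddle a b)).1
      (hm.trans (lift_outer_comp_solveMiddle s.condition).symm))

end SolveMiddle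

theorem stmt4_general {C : Type*} [Category C] [Preadditive C] [HasBinaryBiproducts C]
    {A B X : C} (a : A ⟶ X) (b : B ⟶ X) :
    IsPullback
      (biprod.desc (0 : A ⟶ X) b)
      (biprod.lift (biprod.desc (𝟙 A) 0)
        (biprod.lift (biprod.desc (-a) b) (biprod.desc 0 (𝟙 B))))
      (biprod.lift (𝟙 X) (𝟙 X))
      (biprod.lift (biprod.desc a (biprod.desc (𝟙 X) 0))
        (biprod.desc 0 (biprod.desc 0 b))) := by
  rw [← solveMiddle_comp_desc_zero a b]
  exact isPullback_biprod_diag_of_isLimit_fork (isLimitForkSolveMiddle a b)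

theorem stmt4 {C : Type*} [Category C] [Preadditive C] [HasBinaryBiproducts C]
    (X P₀ : C) (μ : P₀ ⟶ X) :
    IsPullback
      -- top map `(0, μ) : X ⊞ P₀ ⟶ X`
      (biprod.desc (0 : X ⟶ X) μ)
      -- left map `X ⊞ P₀ ⟶ X ⊞ (X ⊞ P₀)`, matrix rows `(1,0), (−1,μ), (0,1)`
      (biprod.lift (biprod.desc (𝟙 X) 0)
        (biprod.lift (biprod.desc (-(𝟙 X)) μ) (biprod.desc 0 (𝟙 P₀))))
      -- right map: the diagonal `X ⟶ X ⊞ X`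
      (biprod.lift (𝟙 X) (𝟙 X))
      -- bottom map `X ⊞ (X ⊞ P₀) ⟶ X ⊞ X`, matrix rows `(1,1,0), (0,0,μ)`
      (biprod.lift (biprod.desc (𝟙 X) (biprod.desc (𝟙 X) 0))
        (biprod.desc 0 (biprod.desc 0 μ))) :=
  stmt4_general (𝟙 X) μ
end
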